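/- arXiv:1911.07750 — 7 statements merged into one kernel-verified Lean document; each statement's English description precedes it below -/
import Mathlib

section
/- Soundness of the Tc_P iterates (Theorem 1, Point 1): for every iteration i ∈ ℕ, every atom a ∈ A, and every total choice C ⊆ F, if C ∈ λ_a^i then C ∪ R ⊨ a. -/
open Classical

/-- A ground definite program `P = (A, F, R)`: facts `F ⊆ A` and a finite set of rules,
each rule being a pair `(h, B)` with head `h ∈ A \ F` and body `B` a finite nonempty
subset of `A`. -/
structure GroundProgram (A : Type) where
  F : Set A
  R : Finset (A × Finset A)
  head_not_fact : ∀ r ∈ R, r.1 ∉ F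
  body_nonempty : ∀ r ∈ R, r.2.Nonempty

variable {A : Type}

/-- The immediate consequence operator `T_{C∪R}`. -/
def step (P : GroundProgram A) (C : Set A) (I : Set A) : Set A :=
  C ∪ {h | ∃ B : Finset A, (h, B) ∈ P.R ∧ ∀ b ∈ B, b ∈ I}

/-- Entailment `C ∪ R ⊨ a`: `a` belongs to `⋃ k, T_{C∪R}^k(∅)`. -/
def entails (P : GroundProgram A) (C : Set A) (a : A) : Prop :=
  a ∈ ⋃ k : ℕ, (step P C)^[k] ∅

/-- The `Tc_P` operator on parameterized interpretations (formulas represented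
semantically by their sets of models, which are sets of total choices `C ⊆ F`). -/
noncomputable def Tc (P : GroundProgram A) (I : A → Set (Set A)) : A → Set (Set A) :=
  fun a =>
    if a ∈ P.F then {C | C ⊆ P.F ∧ a ∈ C}
    else {C | ∃ B : Finset A, (a, B) ∈ P.R ∧ ∀ b ∈ B, C ∈ I b}

/-- The parameterized interpretation mapping every atom to `⊥` (i.e. `∅`). -/
def Ibot : A → Set (Set A) := fun _ => ∅

/-- The `Tc_P` iterates match the iterates of `T_{C∪R}` stage by stage, so soundness holds
with the same iteration count. -/
theorem mem_step_iterate_of_mem_Tc_iterate (P : GroundProgram A) (C : Set A) (i : ℕ) :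
    ∀ a : A, C ∈ (Tc P)^[i] Ibot a → a ∈ (step P C)^[i] ∅ := by
  induction i with
  | zero => intro a h; exact h.elim
  | succ n ih =>
    intro a h
    rw [Function.iterate_succ_apply'] at h ⊢
    by_cases ha : a ∈ P.F
    · rw [Tc, if_pos ha] at h
      exact Or.inl h.2
    · rw [Tc, if_neg ha] at h
      obtain ⟨B, hB, hb⟩ := h
      exact Or.inr ⟨B, hB, fun b hbB => ih b (hb b hbB)⟩

/-- Theorem 1, Point 1 (soundness of the `Tc_P` iterates): for every iteration `i`,
every atom `a` and every total choice `C ⊆ F`, if `C ⊨ λ_a^i` then `C ∪ R ⊨ a`. -/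
theorem tc_iterates_sound [Fintype A] (P : GroundProgram A) (i : ℕ) (a : A)
    (C : Set A) (hC : C ⊆ P.F) (h : C ∈ (Tc P)^[i] Ibot a) :
    entails P C a := by
  exact Set.mem_iUnion.2 ⟨i, mem_step_iterate_of_mem_Tc_iterate P C i a h⟩
end

section
/- Eventual correctness of the Tc_P iterates (Theorem 1, Point 2): for every atom a ∈ A and every total choice C ⊆ F, there exists i₀ ∈ ℕ such that for every iteration i ≥ i₀, C ∪ R ⊨ a if and only if C ∈ λ_a^i. -/
/-!
For a fixed total choice `C ⊆ F`, reading a parameterized interpretation `I` at `C`, that is,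
passing to `{a | C ∈ I a}`, intertwines `Tc_P` with the immediate consequence operator
(`mem_Tc_iff`). Hence the `i`-th iterates from the bottom agree: `C ∈ λ_a^i` iff
`a ∈ T_{C∪R}^i(∅)` (`mem_Tc_iterate_iff`). Since `T_{C∪R}` is monotone, its iterates from `∅`
increase, so an entailed atom lies in all iterates from its first occurrence on, and a
non-entailed atom lies in none of them.
-/

open Classical

variable {A : Type}

/-- Evaluating `Tc` at a fixed total choice `C` turns it into `step P C`. The hypothesis `C ⊆ P.F`
keeps `C` among the models of the facts and away from the non-facts; rule heads are never facts,
so the two cases of `Tc` match the two parts of the union in `step`. -/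
theorem mem_Tc_iff (P : GroundProgram A) {C : Set A} (hC : C ⊆ P.F) (I : A → Set (Set A)) (a : A) :
    C ∈ Tc P I a ↔ a ∈ step P C {b | C ∈ I b} := by
  by_cases ha : a ∈ P.F
  · simp only [Tc, if_pos ha, step, Set.mem_ofPred_eq, Set.mem_union]
    constructor
    · exact fun h => Or.inl h.2
    · rintro (h | ⟨B, hB, -⟩)
      · exact ⟨hC, h⟩
      · exact absurd ha (P.head_not_fact _ hB)
  · simp only [Tc, if_neg ha, step, Set.mem_ofPred_eq, Set.mem_union]
    exact ⟨Or.inr, fun h => h.resolve_left fun haC => ha (hC haC)⟩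

theorem mem_Tc_iterate_iff (P : GroundProgram A) {C : Set A} (hC : C ⊆ P.F) (i : ℕ) (a : A) :
    C ∈ (Tc P)^[i] Ibot a ↔ a ∈ (step P C)^[i] ∅ := by
  induction i generalizing a with
  | zero => simp [Ibot]
  | succ i ih =>
    rw [Function.iterate_succ_apply', Function.iterate_succ_apply', mem_Tc_iff P hC]
    have h : {b | C ∈ (Tc P)^[i] Ibot b} = (step P C)^[i] ∅ := Set.ext ih
    rw [h]

theorem step_mono (P : GroundProgram A) (C : Set A) : Monotone (step P C) := by
  rintro I J hIJ x (hx | ⟨B, hB, h⟩)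
  · exact Or.inl hx
  · exact Or.inr ⟨B, hB, fun b hb => hIJ (h b hb)⟩

/-- Theorem 1, Point 2 (eventual correctness of the `Tc_P` iterates): for every atom `a`
and every total choice `C ⊆ F`, there is an `i₀` such that for every iteration `i ≥ i₀`,
`C ∪ R ⊨ a` if and only if `C ⊨ λ_a^i`. -/
theorem tc_iterates_eventually_correct [Fintype A] (P : GroundProgram A) (a : A)
    (C : Set A) (hC : C ⊆ P.F) :
    ∃ i₀ : ℕ, ∀ i ≥ i₀, (entails P C a ↔ C ∈ (Tc P)^[i] Ibot a) := by
  by_cases h : entails P C a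
  · obtain ⟨k, hk⟩ := Set.mem_iUnion.mp h
    refine ⟨k, fun i hi => iff_of_true h ((mem_Tc_iterate_iff P hC i a).mpr ?_)⟩
    exact (step_mono P C).monotone_iterate_of_le_map (Set.empty_subset _) hi hk
  · exact ⟨0, fun i _ => iff_of_false h fun hi =>
      h (Set.mem_iUnion.mpr ⟨i, (mem_Tc_iterate_iff P hC i a).mp hi⟩)⟩
end

section
/- Query-equivalent programs yield equivalent fixpoint formulas (Theorem 3, abstract form): let P = (A, F, R) and M = (A', F, R') be two ground definite programs with the same set of facts F, and let q be an atom belonging to both A and A'. If for every total choice C ⊆ F we have C ∪ R ⊨ q if and only if C ∪ R' ⊨ q, then for every total choice C ⊆ F there exists i₀ ∈ ℕ such that for all i ≥ i₀, C ∈ Tc_P^i(I_⊥)(q) if and only if C ∈ Tc_M^i(I_⊥)(q); that is, the formulas associated with q in the fixpoints of Tc_P and Tc_M are equivalent. -/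
/-!
Fix a total choice `C ⊆ F`. By induction on `i`, `C` is a model of the `i`-th iterate of `Tc` at
an atom exactly when that atom lies in the `i`-th iterate of the immediate consequence operator
(`mem_Tc_iterate_iff`). The latter iterates increase to the set of entailed atoms, so membership
of `q` in them eventually agrees with entailment of `q` (`eventually_mem_step_iterate_iff`).
Applying this to both programs, query equivalence gives the claim beyond the larger threshold.
-/

open Classical

variable {A : Type}

/-- Membership of an atom in the increasing stages of `step P C` is eventually constant,
with limit value entailment. -/
theorem eventually_mem_step_iterate_iff (P : GroundProgram A) (C : Set A) (a : A) :
    ∃ i₀ : ℕ, ∀ i ≥ i₀, (a ∈ (step P C)^[i] ∅ ↔ entails P C a) := by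
  have hmono : Monotone fun i => (step P C)^[i] (∅ : Set A) :=
    (step_mono P C).monotone_iterate_of_le_map (Set.empty_subset _)
  by_cases h : entails P C a
  · obtain ⟨k, hk⟩ := Set.mem_iUnion.mp h
    exact ⟨k, fun i hi => iff_of_true (hmono hi hk) h⟩
  · exact ⟨0, fun i _ => iff_of_false (fun hi => h (Set.mem_iUnion.mpr ⟨i, hi⟩)) h⟩

/-- Theorem 3 (abstract form): two ground definite programs `P` and `M` over a common
universe of ground atoms (so that the query `q` is an atom of both), with the same set
of facts `F`. If for every total choice `C ⊆ F`, `C ∪ R ⊨ q` iff `C ∪ R' ⊨ q`, then for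
every total choice `C ⊆ F` there is `i₀` such that for all `i ≥ i₀`,
`C ∈ Tc_P^i(I_⊥)(q)` iff `C ∈ Tc_M^i(I_⊥)(q)`: the formulas associated with `q` in the
fixpoints of `Tc_P` and `Tc_M` are equivalent. -/
theorem query_equiv_programs_equiv_fixpoint_formulas [Fintype A]
    (P M : GroundProgram A) (hF : M.F = P.F) (q : A)
    (hq : ∀ C : Set A, C ⊆ P.F → (entails P C q ↔ entails M C q)) :
    ∀ C : Set A, C ⊆ P.F →
      ∃ i₀ : ℕ, ∀ i ≥ i₀, (C ∈ (Tc P)^[i] Ibot q ↔ C ∈ (Tc M)^[i] Ibot q) := by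
  intro C hC
  obtain ⟨m, hm⟩ := eventually_mem_step_iterate_iff P C q
  obtain ⟨n, hn⟩ := eventually_mem_step_iterate_iff M C q
  refine ⟨max m n, fun i hi => ?_⟩
  rw [mem_Tc_iterate_iff P hC, mem_Tc_iterate_iff M (hF ▸ hC),
    hm i (le_of_max_le_left hi), hn i (le_of_max_le_right hi)]
  exact hq C hC
end

section
/- Correctness of the magic-Tc_P operator (Theorem 4): let q ∈ A be a query atom, and assume additionally that for every total choice C ⊆ F, C ∪ R ⊨ q if and only if C ∪ R_M ⊨ q (entailment in M). Then for every total choice C ⊆ F there exists i₀ ∈ ℕ such that for every iteration i ≥ i₀, C ∪ R ⊨ q if and only if C ∈ τ_q^i. -/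
/-!
Membership `C ∈ τ_q^i` is squeezed between entailment in the magic program and entailment in the
original one. `mem_Mc_of_mem_stepM` (completeness): `Mc` only over-approximates the magic atoms,
so anything derived by `k` steps of the magic program under `C` has `C` among its models at every
iteration `i ≥ k`. `mem_step_of_mem_Mc` (soundness): a modified rule is a rule of the original
program with an extra magic body atom, so deleting the magic atoms turns an `Mc` derivation of a
non-magic atom into a derivation in the original program. The hypothesis on `q` identifies the two
ends.
-/

open Classical

variable {A : Type}

variable {Mg : Type}

/-- The magic-transform shape condition on the rule set `R_M` of the program
`M = (A ⊎ Mg, F, R_M)`: every rule is either (i) a modified rule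
`(h, {m} ∪ B)` with `h ∈ A \ F`, `m ∈ Mg` and `(h, B) ∈ R`, or (ii) a magic rule
`(m, B')` with head `m ∈ Mg` and nonempty body `B' ⊆ A ⊎ Mg`. -/
def MagicShape (P : GroundProgram A)
    (RM : Finset ((A ⊕ Mg) × Finset (A ⊕ Mg))) : Prop :=
  ∀ r ∈ RM,
    (∃ (h : A) (m : Mg) (B : Finset A),
        (h, B) ∈ P.R ∧ h ∉ P.F ∧
        r = (Sum.inl h, insert (Sum.inr m) (B.image Sum.inl))) ∨
    (∃ (m : Mg) (B' : Finset (A ⊕ Mg)), B'.Nonempty ∧ r = (Sum.inr m, B'))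

/-- The immediate consequence operator of the magic program `M` for total choice
`C ⊆ F` (facts of `M` are the facts of `P`, embedded via `Sum.inl`). -/
def stepM (RM : Finset ((A ⊕ Mg) × Finset (A ⊕ Mg))) (C : Set A)
    (I : Set (A ⊕ Mg)) : Set (A ⊕ Mg) :=
  (Sum.inl '' C) ∪ {h | ∃ B : Finset (A ⊕ Mg), (h, B) ∈ RM ∧ ∀ b ∈ B, b ∈ I}

/-- Entailment `C ∪ R_M ⊨ x` in the magic program `M`. -/
def entailsM (RM : Finset ((A ⊕ Mg) × Finset (A ⊕ Mg))) (C : Set A)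
    (x : A ⊕ Mg) : Prop :=
  x ∈ ⋃ k : ℕ, (stepM RM C)^[k] ∅

/-- The magic-`Tc_P` operator `Mc_P`: on facts and original derived atoms it behaves
like `Tc_M`, but a magic atom `m` gets formula `⊤` (the set of all total choices) as
soon as some rule for `m` has all body formulas present (nonempty), and `⊥` otherwise. -/
noncomputable def Mc (P : GroundProgram A)
    (RM : Finset ((A ⊕ Mg) × Finset (A ⊕ Mg)))
    (I : A ⊕ Mg → Set (Set A)) : A ⊕ Mg → Set (Set A) := fun x =>
  match x with
  | Sum.inl a =>
      if a ∈ P.F then {C | C ⊆ P.F ∧ a ∈ C}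
      else {C | ∃ B : Finset (A ⊕ Mg), (Sum.inl a, B) ∈ RM ∧ ∀ b ∈ B, C ∈ I b}
  | Sum.inr m =>
      if ∃ B : Finset (A ⊕ Mg), (Sum.inr m, B) ∈ RM ∧ ∀ b ∈ B, (I b).Nonempty
      then {C | C ⊆ P.F} else ∅

/-- The `Tc_M` operator of the magic program `M` (magic atoms are never facts). -/
noncomputable def TcM (P : GroundProgram A)
    (RM : Finset ((A ⊕ Mg) × Finset (A ⊕ Mg)))
    (I : A ⊕ Mg → Set (Set A)) : A ⊕ Mg → Set (Set A) := fun x =>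
  match x with
  | Sum.inl a =>
      if a ∈ P.F then {C | C ⊆ P.F ∧ a ∈ C}
      else {C | ∃ B : Finset (A ⊕ Mg), (Sum.inl a, B) ∈ RM ∧ ∀ b ∈ B, C ∈ I b}
  | Sum.inr m =>
      {C | ∃ B : Finset (A ⊕ Mg), (Sum.inr m, B) ∈ RM ∧ ∀ b ∈ B, C ∈ I b}

/-- The parameterized interpretation over `A ⊎ Mg` mapping every atom to `⊥`. -/
def IbotM : A ⊕ Mg → Set (Set A) := fun _ => ∅

/-- Soundness: over-approximating the magic atoms does no harm, since forgetting the magic atom in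
the body of a modified rule leaves a rule of `P`. -/
theorem mem_step_of_mem_Mc (P : GroundProgram A)
    (RM : Finset ((A ⊕ Mg) × Finset (A ⊕ Mg))) (hRM : MagicShape P RM) (C : Set A) (i : ℕ) :
    ∀ a : A, C ∈ (Mc P RM)^[i] IbotM (Sum.inl a) → a ∈ (step P C)^[i] ∅ := by
  induction i with
  | zero => intro a h; exact h.elim
  | succ i ih =>
    intro a h
    rw [Function.iterate_succ_apply'] at h ⊢
    by_cases ha : a ∈ P.F
    · simp only [Mc, if_pos ha] at h
      exact Or.inl h.2
    · simp only [Mc, if_neg ha] at h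
      obtain ⟨B, hB, hb⟩ := h
      rcases hRM _ hB with ⟨h', m, B₀, hR, -, heq⟩ | ⟨m, B', -, heq⟩
      · obtain ⟨h1, rfl⟩ := Prod.mk.inj heq
        obtain rfl := Sum.inl.inj h1
        refine Or.inr ⟨B₀, hR, fun b hbB => ih b (hb _ ?_)⟩
        exact Finset.mem_insert_of_mem (Finset.mem_image_of_mem _ hbB)
      · exact absurd (Prod.mk.inj heq).1 Sum.inl_ne_inr

/-- Completeness. The bound is stated for all `i ≥ k` at once, which avoids proving that the
iterates of `Mc` increase. -/
theorem mem_Mc_of_mem_stepM (P : GroundProgram A)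
    (RM : Finset ((A ⊕ Mg) × Finset (A ⊕ Mg))) (hRM : MagicShape P RM) (C : Set A)
    (hC : C ⊆ P.F) (k : ℕ) :
    ∀ x : A ⊕ Mg, x ∈ (stepM RM C)^[k] ∅ → ∀ i ≥ k, C ∈ (Mc P RM)^[i] IbotM x := by
  induction k with
  | zero => intro x h; exact h.elim
  | succ k ih =>
    intro x h i hi
    obtain ⟨j, rfl⟩ : ∃ j, i = j + 1 := ⟨i - 1, by omega⟩
    rw [Function.iterate_succ_apply'] at h ⊢
    rcases h with ⟨a, ha, rfl⟩ | ⟨B, hB, hb⟩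
    · simp only [Mc, if_pos (hC ha)]
      exact ⟨hC, ha⟩
    · have hbody : ∀ b ∈ B, C ∈ (Mc P RM)^[j] IbotM b :=
        fun b hbB => ih b (hb b hbB) j (by omega)
      cases x with
      | inl a =>
        have ha : a ∉ P.F := by
          rcases hRM _ hB with ⟨h', m, B₀, -, hF, heq⟩ | ⟨m, B', -, heq⟩
          · obtain rfl := Sum.inl.inj (Prod.mk.inj heq).1
            exact hF
          · exact absurd (Prod.mk.inj heq).1 Sum.inl_ne_inr
        simp only [Mc, if_neg ha]
        exact ⟨B, hB, hbody⟩
      | inr m =>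
        -- `C` itself witnesses that every body formula is satisfiable.
        have hm : ∃ B : Finset (A ⊕ Mg), (Sum.inr m, B) ∈ RM ∧
            ∀ b ∈ B, ((Mc P RM)^[j] IbotM b).Nonempty := ⟨B, hB, fun b hbB => ⟨C, hbody b hbB⟩⟩
        simp only [Mc, if_pos hm]
        exact hC

/-- Theorem 4 (correctness of the magic-`Tc_P` operator): for a query atom `q ∈ A`,
assuming that for every total choice `C ⊆ F`, `C ∪ R ⊨ q` iff `C ∪ R_M ⊨ q`, for every
total choice `C ⊆ F` there is an `i₀` such that for every `i ≥ i₀`,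
`C ∪ R ⊨ q` iff `C ∈ τ_q^i`. -/
theorem magic_tc_correct [Fintype A] [Fintype Mg] (P : GroundProgram A)
    (RM : Finset ((A ⊕ Mg) × Finset (A ⊕ Mg))) (hRM : MagicShape P RM) (q : A)
    (hq : ∀ C : Set A, C ⊆ P.F → (entails P C q ↔ entailsM RM C (Sum.inl q))) :
    ∀ C : Set A, C ⊆ P.F →
      ∃ i₀ : ℕ, ∀ i ≥ i₀,
        (entails P C q ↔ C ∈ (Mc P RM)^[i] IbotM (Sum.inl q)) := by
  intro C hC
  have sound : ∀ i, C ∈ (Mc P RM)^[i] IbotM (Sum.inl q) → entails P C q := fun i h =>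
    Set.mem_iUnion.2 ⟨i, mem_step_of_mem_Mc P RM hRM C i q h⟩
  by_cases h : entails P C q
  · obtain ⟨k, hk⟩ := Set.mem_iUnion.1 ((hq C hC).1 h)
    exact ⟨k, fun i hi => ⟨fun _ => mem_Mc_of_mem_stepM P RM hRM C hC k _ hk i hi, sound i⟩⟩
  · exact ⟨0, fun i _ => ⟨fun h' => absurd h' h, sound i⟩⟩
end

section
/- Mc_P dominates Tc_M (Lemma 1): for every iteration i ∈ ℕ and every atom a ∈ A_M, the formula τ_a^i exists if and only if the formula δ_a^i exists (i.e., τ_a^i ≠ ∅ iff δ_a^i ≠ ∅), and moreover δ_a^i ⊆ τ_a^i, i.e., for every total choice C ⊆ F, C ∈ δ_a^i implies C ∈ τ_a^i. -/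
/-!
Formulas in the iteration of `Tc_M` are positive, so they are satisfiable exactly when the
largest total choice `F` satisfies them. Accordingly, the induction on `i` carries three facts
about every atom: `δ ⊆ τ`; if `τ` is nonempty then `F ∈ δ` (which gives the equivalence of
existence); and `δ` consists of total choices `C ⊆ F`. The last one is needed for the first at a
magic atom, whose `τ` is `{C | C ⊆ F}`, and it is preserved because rule bodies are nonempty.
-/

open Classical

variable {A : Type}

variable {Mg : Type}

theorem MagicShape.body_nonempty {P : GroundProgram A}
    {RM : Finset ((A ⊕ Mg) × Finset (A ⊕ Mg))} (hRM : MagicShape P RM)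
    {x : A ⊕ Mg} {B : Finset (A ⊕ Mg)} (h : (x, B) ∈ RM) : B.Nonempty := by
  rcases hRM _ h with ⟨h', m, B', -, -, heq⟩ | ⟨m, B', hne, heq⟩
  · obtain ⟨-, rfl⟩ := Prod.mk.inj heq
    exact Finset.insert_nonempty _ _
  · obtain ⟨-, rfl⟩ := Prod.mk.inj heq
    exact hne

/-- One step of the simultaneous iteration: `T` plays the role of `τ^i` and `D` of `δ^i`. -/
theorem mc_tcM_invariant_step {P : GroundProgram A}
    {RM : Finset ((A ⊕ Mg) × Finset (A ⊕ Mg))} (hRM : MagicShape P RM)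
    {T D : A ⊕ Mg → Set (Set A)}
    (ih : ∀ x, D x ⊆ T x ∧ ((T x).Nonempty → P.F ∈ D x) ∧ ∀ C ∈ D x, C ⊆ P.F) (x : A ⊕ Mg) :
    TcM P RM D x ⊆ Mc P RM T x ∧ ((Mc P RM T x).Nonempty → P.F ∈ TcM P RM D x) ∧
      ∀ C ∈ TcM P RM D x, C ⊆ P.F := by
  have hsub : ∀ (y : A ⊕ Mg) (B : Finset (A ⊕ Mg)) (C : Set A),
      (y, B) ∈ RM → (∀ b ∈ B, C ∈ D b) → C ⊆ P.F := by
    intro y B C hB hC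
    obtain ⟨b, hb⟩ := hRM.body_nonempty hB
    exact (ih b).2.2 C (hC b hb)
  rcases x with a | m
  · by_cases ha : a ∈ P.F
    · simp only [TcM, Mc, if_pos ha]
      exact ⟨subset_rfl, fun _ => ⟨subset_rfl, ha⟩, fun C hC => hC.1⟩
    · simp only [TcM, Mc, if_neg ha]
      refine ⟨?_, ?_, ?_⟩
      · rintro C ⟨B, hB, hC⟩
        exact ⟨B, hB, fun b hb => (ih b).1 (hC b hb)⟩
      · rintro ⟨C, B, hB, hC⟩
        exact ⟨B, hB, fun b hb => (ih b).2.1 ⟨C, hC b hb⟩⟩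
      · rintro C ⟨B, hB, hC⟩
        exact hsub _ B C hB hC
  · simp only [TcM, Mc]
    refine ⟨?_, ?_, ?_⟩
    · rintro C ⟨B, hB, hC⟩
      rw [if_pos ⟨B, hB, fun b hb => ⟨C, (ih b).1 (hC b hb)⟩⟩]
      exact hsub _ B C hB hC
    · intro hne
      split_ifs at hne with h
      · obtain ⟨B, hB, hC⟩ := h
        exact ⟨B, hB, fun b hb => (ih b).2.1 (hC b hb)⟩
      · exact absurd hne Set.not_nonempty_empty
    · rintro C ⟨B, hB, hC⟩
      exact hsub _ B C hB hC

theorem mc_tcM_invariant {P : GroundProgram A}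
    {RM : Finset ((A ⊕ Mg) × Finset (A ⊕ Mg))} (hRM : MagicShape P RM) (i : ℕ) :
    ∀ x, (TcM P RM)^[i] IbotM x ⊆ (Mc P RM)^[i] IbotM x ∧
      (((Mc P RM)^[i] IbotM x).Nonempty → P.F ∈ (TcM P RM)^[i] IbotM x) ∧
      ∀ C ∈ (TcM P RM)^[i] IbotM x, C ⊆ P.F := by
  induction i with
  | zero => intro x; simp [IbotM]
  | succ n ih =>
    simp only [Function.iterate_succ_apply']
    exact mc_tcM_invariant_step hRM ih

/-- Lemma 1 (`Mc_P` dominates `Tc_M`): for every iteration `i` and every atom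
`x ∈ A ⊎ Mg`, the formula `τ_x^i` exists iff the formula `δ_x^i` exists (i.e., their
model sets are nonempty simultaneously), and moreover every total choice satisfying
`δ_x^i` also satisfies `τ_x^i`. -/
theorem mc_dominates_tcM [Fintype A] [Fintype Mg] (P : GroundProgram A)
    (RM : Finset ((A ⊕ Mg) × Finset (A ⊕ Mg))) (hRM : MagicShape P RM)
    (i : ℕ) (x : A ⊕ Mg) :
    (((Mc P RM)^[i] IbotM x).Nonempty ↔ ((TcM P RM)^[i] IbotM x).Nonempty) ∧
    (TcM P RM)^[i] IbotM x ⊆ (Mc P RM)^[i] IbotM x := by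
  obtain ⟨hsub, hfull, -⟩ := mc_tcM_invariant hRM i x
  exact ⟨⟨fun h => ⟨P.F, hfull h⟩, fun h => h.mono hsub⟩, hsub⟩
end

section
/- Correctness of semi-naive evaluation for Tc_P (the Claim of Section 3): for every iteration i ≥ 1, Tc_P^i(I^0) = I^i, i.e., the naive iterates of the Tc_P operator started from I^0 coincide (as functions A → Set (Set F), i.e., up to formula equivalence) with the semi-naive iterates produced by the Sc_P operator. -/
/-!
The semi-naive iterates satisfy the following invariant (`SemiNaiveInv`): `I` is inflationary,
`I(a) ⊆ Tc_P(I)(a)` for all `a`, and already correct on facts, and every rule whose body atoms all have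
`ΔI(b) = ∅` has been accounted for in `I`. Under this invariant the rules skipped by
`β_a(I, ΔI)` contribute nothing new, so `Sc_P(I, ΔI) = Tc_P(I)` (`SemiNaiveInv.Sc_eq`).
The invariant is preserved (`SemiNaiveInv.next`): monotonicity of `Tc_P` gives the inflationary
property, and an atom with `ΔTc_P(I, ΔI)(b) = ∅` keeps its value, so a rule
whose body atoms are all unchanged was already applied in computing `Tc_P(I)`.
-/

open Classical

variable {A : Type}

/-- `β_a(I, ΔI)`: the union of `⋂_{b ∈ B} I(b)` over all rules `(a, B) ∈ R` such that
`I(b) ≠ ∅` for all `b ∈ B` and `ΔI(b) ≠ ∅` for at least one `b ∈ B`. -/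
def betaSN (P : GroundProgram A) (I DI : A → Set (Set A)) (a : A) : Set (Set A) :=
  {C | ∃ B : Finset A, (a, B) ∈ P.R ∧ (∀ b ∈ B, (I b).Nonempty) ∧
      (∃ b ∈ B, (DI b).Nonempty) ∧ ∀ b ∈ B, C ∈ I b}

/-- The `ΔTc_P` operator: on a derived atom `a ∈ A \ F` it returns `β_a(I, ΔI)` if
`I(a) = ∅`, returns `I(a) ∪ β_a(I, ΔI)` if `I(a) ≠ ∅` and `I(a) ∪ β_a(I, ΔI) ≠ I(a)`,
and `∅` otherwise; on facts it returns `∅`. -/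
noncomputable def dTc (P : GroundProgram A) (I DI : A → Set (Set A)) :
    A → Set (Set A) := fun a =>
  if a ∈ P.F then ∅
  else if I a = ∅ then betaSN P I DI a
  else if I a ∪ betaSN P I DI a ≠ I a then I a ∪ betaSN P I DI a
  else ∅

/-- The semi-naive operator `Sc_P`: each atom gets `ΔTc_P(I, ΔI)(a)` if that set is
nonempty, and keeps `I(a)` otherwise. -/
noncomputable def Sc (P : GroundProgram A) (I DI : A → Set (Set A)) :
    A → Set (Set A) := fun a =>
  if (dTc P I DI a).Nonempty then dTc P I DI a else I a

/-- The initial parameterized interpretation `I^0 = ΔI^0`, containing the formulas of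
the facts: `I^0(f) = {C ⊆ F | f ∈ C}` for `f ∈ F` and `I^0(a) = ∅` otherwise. -/
noncomputable def Iinit (P : GroundProgram A) : A → Set (Set A) := fun a =>
  if a ∈ P.F then {C | C ⊆ P.F ∧ a ∈ C} else ∅

/-- The semi-naive iterates `(I^i, ΔI^i)`: `I^0 = ΔI^0 = Iinit`,
`I^{i+1} = Sc_P(I^i, ΔI^i)` and `ΔI^{i+1} = ΔTc_P(I^i, ΔI^i)`. -/
noncomputable def snIter (P : GroundProgram A) :
    ℕ → (A → Set (Set A)) × (A → Set (Set A))
  | 0 => (Iinit P, Iinit P)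
  | n + 1 => (Sc P (snIter P n).1 (snIter P n).2, dTc P (snIter P n).1 (snIter P n).2)

/-- The invariant of semi-naive evaluation. The field `stale` says that a rule whose body
has no recently changed atom contributes nothing beyond `I`. -/
structure SemiNaiveInv (P : GroundProgram A) (I DI : A → Set (Set A)) : Prop where
  le_Tc : ∀ a, I a ⊆ Tc P I a
  fact : ∀ a ∈ P.F, I a = Tc P I a
  stale : ∀ a B C, (a, B) ∈ P.R → (∀ b ∈ B, C ∈ I b) → (∀ b ∈ B, DI b = ∅) → C ∈ I a

theorem Tc_mono (P : GroundProgram A) {I J : A → Set (Set A)} (h : ∀ a, I a ⊆ J a) (a : A) :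
    Tc P I a ⊆ Tc P J a := by
  unfold Tc
  split_ifs with ha
  · exact subset_rfl
  · rintro C ⟨B, hB, hC⟩
    exact ⟨B, hB, fun b hb => h b (hC b hb)⟩

/-- The case distinctions in `ΔTc_P` and `Sc_P` only serve to detect change: the resulting
value is always the union. -/
theorem Sc_derived (P : GroundProgram A) (I DI : A → Set (Set A)) {a : A} (ha : a ∉ P.F) :
    Sc P I DI a = I a ∪ betaSN P I DI a := by
  unfold Sc dTc
  rw [if_neg ha]
  by_cases hI : I a = ∅
  · rw [if_pos hI, hI, Set.empty_union]
    split_ifs with hne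
    · rfl
    · exact (Set.not_nonempty_iff_eq_empty.mp hne).symm
  · rw [if_neg hI]
    by_cases hU : I a ∪ betaSN P I DI a = I a
    · simp [hU]
    · rw [if_pos hU, if_pos ((Set.nonempty_iff_ne_empty.mpr hI).mono Set.subset_union_left)]

theorem Sc_fact (P : GroundProgram A) (I DI : A → Set (Set A)) {a : A} (ha : a ∈ P.F) :
    Sc P I DI a = I a := by
  simp [Sc, dTc, ha]

theorem SemiNaiveInv.Sc_eq {P : GroundProgram A} {I DI : A → Set (Set A)} (h : SemiNaiveInv P I DI) :
    Sc P I DI = Tc P I := by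
  funext a
  by_cases ha : a ∈ P.F
  · rw [Sc_fact P I DI ha, h.fact a ha]
  · rw [Sc_derived P I DI ha]
    apply Set.Subset.antisymm
    · refine Set.union_subset (h.le_Tc a) ?_
      rintro C ⟨B, hB, -, -, hC⟩
      rw [Tc, if_neg ha]
      exact ⟨B, hB, hC⟩
    · intro C hC
      rw [Tc, if_neg ha] at hC
      obtain ⟨B, hB, hC⟩ := hC
      by_cases hD : ∃ b ∈ B, (DI b).Nonempty
      · exact Or.inr ⟨B, hB, fun b hb => ⟨C, hC b hb⟩, hD, hC⟩
      · refine Or.inl (h.stale a B C hB hC fun b hb => ?_)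
        exact Set.not_nonempty_iff_eq_empty.mp fun hne => hD ⟨b, hb, hne⟩

theorem SemiNaiveInv.init (P : GroundProgram A) : SemiNaiveInv P (Iinit P) (Iinit P) where
  le_Tc a := by
    by_cases ha : a ∈ P.F <;> simp [Iinit, Tc, ha]
  fact a ha := by simp [Iinit, Tc, ha]
  stale a B C hB hC hD := by
    -- Bodies are nonempty, so at the start no rule with a satisfied body is stale.
    obtain ⟨b, hb⟩ := P.body_nonempty _ hB
    have hCb := hC b hb
    rw [hD b hb] at hCb
    exact hCb.elim

theorem SemiNaiveInv.next {P : GroundProgram A} {I DI : A → Set (Set A)} (h : SemiNaiveInv P I DI) :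
    SemiNaiveInv P (Sc P I DI) (dTc P I DI) where
  le_Tc a := by
    rw [h.Sc_eq]
    exact Tc_mono P h.le_Tc a
  fact a ha := by
    rw [h.Sc_eq]
    simp [Tc, ha]
  stale a B C hB hC hD := by
    rw [h.Sc_eq, Tc, if_neg (P.head_not_fact _ hB)]
    refine ⟨B, hB, fun b hb => ?_⟩
    have hCb := hC b hb
    rwa [Sc, if_neg (Set.not_nonempty_iff_eq_empty.mpr (hD b hb))] at hCb

theorem semiNaiveInv_snIter (P : GroundProgram A) (n : ℕ) : SemiNaiveInv P (snIter P n).1 (snIter P n).2 := by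
  induction n with
  | zero => exact SemiNaiveInv.init P
  | succ n ih => exact ih.next

/-- Correctness of semi-naive evaluation for `Tc_P` (the Claim of Section 3): for every
iteration `i ≥ 1`, the naive iterate `Tc_P^i(I^0)` coincides, as a function
`A → Set (Set F)` (i.e. up to formula equivalence), with the semi-naive iterate `I^i`
produced by the `Sc_P` operator. -/
theorem semi_naive_correct [Fintype A] (P : GroundProgram A) (i : ℕ) (hi : 1 ≤ i) :
    (Tc P)^[i] (Iinit P) = (snIter P i).1 := by
  clear hi
  induction i with
  | zero => rfl
  | succ n ih =>
    rw [Function.iterate_succ_apply', ih]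
    exact (semiNaiveInv_snIter P n).Sc_eq.symm
end

section
/- Finite convergence of the Tc_P operator: there exists i₀ ∈ ℕ such that Tc_P^{i₀+1}(I_⊥) = Tc_P^{i₀}(I_⊥) (so λ_a^i = λ_a^{i₀} for all i ≥ i₀ and all atoms a), and moreover for every atom a ∈ A and every total choice C ⊆ F, C ∪ R ⊨ a if and only if C ∈ λ_a^{i₀}. -/
/-!
`Tc P` is monotone, so its iterates from the bottom interpretation form an ascending chain in the
finite lattice `A → Set (Set A)`, which is eventually constant. Reading `Tc P` pointwise at a fixed
total choice `C ⊆ F` gives exactly the operator `step P C`: for every stage `k`, `C ∈ λ_a^k` iff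
`a ∈ T_{C∪R}^k(∅)` (`mem_iterate_Tc_iff`). Since the `λ_a^k` increase to the stable value,
membership in the union of all stages is membership at the stable stage.
-/

open Classical

variable {A : Type}

theorem Tc_monotone (P : GroundProgram A) : Monotone (Tc P) := by
  intro I J h a C hC
  unfold Tc at hC ⊢
  split_ifs at hC ⊢ with ha
  · exact hC
  · obtain ⟨B, hB, hb⟩ := hC
    exact ⟨B, hB, fun b hbB => h b (hb b hbB)⟩

theorem iterate_Tc_monotone (P : GroundProgram A) :
    Monotone fun k : ℕ => (Tc P)^[k] Ibot :=
  (Tc_monotone P).monotone_iterate_of_le_map fun _ => Set.empty_subset _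

/-- At a fixed total choice `C`, iterating `Tc P` simulates iterating `step P C` stage by stage.
Facts are never rule heads and `C` contains only facts, so the two branches of `Tc` match the two
parts of the union defining `step`. -/
theorem mem_iterate_Tc_iff (P : GroundProgram A) {C : Set A} (hC : C ⊆ P.F) (k : ℕ) (a : A) :
    C ∈ (Tc P)^[k] Ibot a ↔ a ∈ (step P C)^[k] ∅ := by
  induction k generalizing a with
  | zero => simp [Ibot]
  | succ k ih =>
    rw [Function.iterate_succ_apply', Function.iterate_succ_apply']
    simp only [Tc, step, Set.mem_union, Set.mem_ofPred_eq, ← ih]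
    by_cases ha : a ∈ P.F
    · rw [if_pos ha]
      constructor
      · exact fun h => Or.inl h.2
      · rintro (h | ⟨B, hB, -⟩)
        · exact ⟨hC, h⟩
        · exact absurd ha (P.head_not_fact _ hB)
    · rw [if_neg ha]
      exact ⟨Or.inr, fun h => h.resolve_left fun h' => ha (hC h')⟩

/-- Finite convergence of the `Tc_P` operator: there is an `i₀` with
`Tc_P^{i₀+1}(I_⊥) = Tc_P^{i₀}(I_⊥)` (hence `λ_a^i = λ_a^{i₀}` for all `i ≥ i₀` and all
atoms `a`), and moreover for every atom `a` and total choice `C ⊆ F`,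
`C ∪ R ⊨ a` iff `C ∈ λ_a^{i₀}`. -/
theorem tc_finite_convergence [Fintype A] (P : GroundProgram A) :
    ∃ i₀ : ℕ,
      (Tc P)^[i₀ + 1] Ibot = (Tc P)^[i₀] Ibot ∧
      (∀ i ≥ i₀, ∀ a : A, (Tc P)^[i] Ibot a = (Tc P)^[i₀] Ibot a) ∧
      (∀ a : A, ∀ C : Set A, C ⊆ P.F →
        (entails P C a ↔ C ∈ (Tc P)^[i₀] Ibot a)) := by
  obtain ⟨n, hn⟩ := WellFoundedGT.monotone_chain_condition
    (⟨fun k : ℕ => (Tc P)^[k] Ibot, iterate_Tc_monotone P⟩ : ℕ →o (A → Set (Set A)))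
  replace hn : ∀ m, n ≤ m → (Tc P)^[n] Ibot = (Tc P)^[m] Ibot := hn
  refine ⟨n, (hn _ n.le_succ).symm, fun i hi a => congrFun (hn i hi).symm a, fun a C hC => ?_⟩
  simp only [entails, Set.mem_iUnion, ← mem_iterate_Tc_iff P hC]
  refine ⟨fun ⟨k, hk⟩ => ?_, fun h => ⟨n, h⟩⟩
  -- A stage `k`, possibly beyond `n`, lies below stage `max n k`, which equals stage `n`.
  rw [hn _ (le_max_left n k)]
  exact iterate_Tc_monotone P (le_max_right n k) a hk
end
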